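/- Let 1 ≤ p < ∞ and for each n ∈ ℕ let X^{(n)} be a random vector in B_p^n with directional distribution C_{n,p}, and set R_n = (∏_{i=1}^n |X_i^{(n)}|)^{1/n} / ((1/n) ∑_{i=1}^n |X_i^{(n)}|^p)^{1/p}. Then for every θ ∈ (0, e^{m_p}), lim_{n→∞} (1/n) log P(R_n < θ) = −I_p(θ). -/

import Mathlib

open MeasureTheory ProbabilityTheory Filter Set

noncomputable section

/-- The `ℓ_p`-norm on `ℝ^n`: `‖x‖_p = (∑ |x_i|^p)^{1/p}`. -/
def pNorm (p : ℝ) {n : ℕ} (x : Fin n → ℝ) : ℝ := (∑ i, |x i| ^ p) ^ (1 / p)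

/-- The unit ball `B_p^n = {x : ‖x‖_p ≤ 1}`. -/
def unitBallp (n : ℕ) (p : ℝ) : Set (Fin n → ℝ) := {x | pNorm p x ≤ 1}

/-- The unit sphere `S_p^{n-1} = {x : ‖x‖_p = 1}`. -/
def unitSpherep (n : ℕ) (p : ℝ) : Set (Fin n → ℝ) := {x | pNorm p x = 1}

/-- The cone spanned by a set: `{r x : r ∈ [0,1], x ∈ A}`. -/
def coneOf {n : ℕ} (A : Set (Fin n → ℝ)) : Set (Fin n → ℝ) :=
  {y | ∃ r ∈ Icc (0:ℝ) 1, ∃ x ∈ A, y = r • x}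

/-- `C` is the cone probability measure `C_{n,p}` on `S_p^{n-1}`: the probability measure
concentrated on the sphere with `C(A) = vol_n({r x : r ∈ [0,1], x ∈ A})/vol_n(B_p^n)` for
measurable `A ⊆ S_p^{n-1}`. -/
def IsConeMeasure (n : ℕ) (p : ℝ) (C : Measure (Fin n → ℝ)) : Prop :=
  IsProbabilityMeasure C ∧ C (unitSpherep n p)ᶜ = 0 ∧
    ∀ A : Set (Fin n → ℝ), MeasurableSet A → A ⊆ unitSpherep n p →
      C A = volume (coneOf A) / volume (unitBallp n p)

/-- A random vector `X` (on the probability space `(Ω, P)`) has directional distribution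
`C_{n,p}`: it equals in distribution `R • Z`, where `Z ∼ C_{n,p}` and `R` is an independent
random variable with values in `[0,1]` whose law has no atom at `0`.  Independence of `R`
and `Z` is encoded by taking the joint law to be the product measure `μ_R ⊗ C_{n,p}`. -/
def HasConeDirDist (n : ℕ) (p : ℝ) {Ω : Type*} [MeasurableSpace Ω] (P : Measure Ω)
    (X : Ω → Fin n → ℝ) : Prop :=
  ∃ (μR : Measure ℝ) (C : Measure (Fin n → ℝ)),
    IsProbabilityMeasure μR ∧ μR (Icc (0:ℝ) 1)ᶜ = 0 ∧ μR {0} = 0 ∧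
    IsConeMeasure n p C ∧
    Measure.map X P = Measure.map (fun rz : ℝ × (Fin n → ℝ) => rz.1 • rz.2) (μR.prod C)

/-- The digamma function `ψ = Γ'/Γ`. -/
def digammaFn (x : ℝ) : ℝ := deriv Real.Gamma x / Real.Gamma x

/-- `H(x) = ψ(x) - log x`. -/
def Hfun (x : ℝ) : ℝ := digammaFn x - Real.log x

/-- The inverse `H⁻¹` of the increasing bijection `H : (0,∞) → (-∞,0)`. -/
def Hinv (y : ℝ) : ℝ := Function.invFunOn Hfun (Ioi 0) y

/-- The constant `m_p = (1/p)(ψ(1/p) + log p)`. -/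
def mConst (p : ℝ) : ℝ := (1/p) * (digammaFn (1/p) + Real.log p)

/-- `G_p(θ) = H⁻¹(p log θ)`. -/
def Gfun (p θ : ℝ) : ℝ := Hinv (p * Real.log θ)

/-- The rate function
`I_p(θ) = [p G_p(θ) - 1] log θ + G_p(θ)[log G_p(θ) - 1] - log Γ(G_p(θ))
            + (1/p)(1 + log p) + log Γ(1/p)`. -/
def ratefn (p θ : ℝ) : ℝ :=
  (p * Gfun p θ - 1) * Real.log θ + Gfun p θ * (Real.log (Gfun p θ) - 1)
    - Real.log (Real.Gamma (Gfun p θ)) + (1/p) * (1 + Real.log p)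
    + Real.log (Real.Gamma (1/p))

/-- The ratio of the two sides of the `p`-generalized AGM inequality:
`R_n = (∏ |x_i|)^{1/n} / ((1/n) ∑ |x_i|^p)^{1/p}`. -/
def ratioAGM (p : ℝ) {n : ℕ} (x : Fin n → ℝ) : ℝ :=
  (∏ i, |x i|) ^ ((1:ℝ)/n) / ((1/(n:ℝ)) * ∑ i, |x i| ^ p) ^ (1/p)

/-!
Let `Y` have independent `p`-Gaussian coordinates. The density of `Y` is a function of `‖Y‖_p`, so
`Y` and `X` charge every cone equally, and `{R < θ}` is a cone. The variables `U i = |Y i| ^ p` are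
independent Gamma variables of shape and rate `s = 1 / p`, and, with `a = G_p(θ) ≤ s`,
`R < θ` says that `log` of the geometric mean minus `log` of the arithmetic mean of the `U i` is
less than `H(a)`.

The Gamma laws of equal shape and rate form an exponential family with sufficient statistic
`log u - u + 1`, so the law of `U` can be tilted to shape and rate `a`. Upper bound: since
`log m ≤ m - 1` for the arithmetic mean `m`, the density of the law of `U` with respect to the
tilted law is at most `exp (-n D)` on the event, where `D` is the relative entropy of `Gamma(a, a)`
with respect to `Gamma(s, s)`. Lower bound: `H(b) < H(a)` for `b < a`, so by the law of large
numbers the event has probability tending to one under the tilt to `b`, and `b` can be taken close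
to `a`. Finally `D` is `I_p(θ)`.
-/

theorem tendsto_inv_mul_log_of_exp_bounds {u : ℕ → ℝ} {r c : ℝ} (hc : 0 < c)
    (hupper : ∀ᶠ n : ℕ in atTop, u n ≤ Real.exp (n * r))
    (hlower : ∀ r' < r, ∀ᶠ n : ℕ in atTop, c * Real.exp (n * r') ≤ u n) :
    Tendsto (fun n : ℕ => (n : ℝ)⁻¹ * Real.log (u n)) atTop (nhds r) := by
  refine tendsto_order.2 ⟨fun q hq => ?_, fun q hq => ?_⟩
  · obtain ⟨r', hqr', hr'⟩ := exists_between hq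
    have hconst : Tendsto (fun n : ℕ => (n : ℝ)⁻¹ * Real.log c) atTop (nhds 0) := by
      simpa using tendsto_inv_atTop_nhds_zero_nat.mul_const (Real.log c)
    filter_upwards [hlower r' hr', hconst.eventually (lt_mem_nhds (sub_neg.2 hqr')),
      eventually_gt_atTop 0] with n hn hconst_n hn0
    have hlog : Real.log c + n * r' ≤ Real.log (u n) := by
      rw [← Real.log_exp (n * r'), ← Real.log_mul hc.ne' (Real.exp_pos _).ne']
      exact Real.log_le_log (by positivity) hn
    calc q < (n : ℝ)⁻¹ * Real.log c + r' := by linarith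
      _ = (n : ℝ)⁻¹ * (Real.log c + n * r') := by field_simp
      _ ≤ (n : ℝ)⁻¹ * Real.log (u n) := by gcongr
  · filter_upwards [hupper, hlower (r - 1) (by linarith), eventually_gt_atTop 0] with n hn hn' hn0
    have hpos : 0 < u n := lt_of_lt_of_le (by positivity) hn'
    refine lt_of_le_of_lt ?_ hq
    rw [inv_mul_le_iff₀ (by positivity)]
    exact (Real.log_le_iff_le_exp hpos).2 hn

theorem pi_withDensity_ofReal {ι : Type*} [Fintype ι] {α : ι → Type*}
    [∀ i, MeasurableSpace (α i)] {μ : ∀ i, Measure (α i)} [∀ i, SigmaFinite (μ i)]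
    {f : ∀ i, α i → ℝ} (hf₀ : ∀ i x, 0 ≤ f i x) (hf : ∀ i, Integrable (f i) (μ i)) :
    Measure.pi (fun i => (μ i).withDensity fun x => ENNReal.ofReal (f i x)) =
      (Measure.pi μ).withDensity fun x => ENNReal.ofReal (∏ i, f i (x i)) := by
  classical
  refine Measure.pi_eq fun s hs => ?_
  have hindicator : (univ.pi s).indicator (fun x => ∏ i, f i (x i)) =
      fun x => ∏ i, (s i).indicator (f i) (x i) := by
    ext x
    by_cases hx : x ∈ univ.pi s
    · rw [indicator_of_mem hx]
      exact Finset.prod_congr rfl fun i _ => (indicator_of_mem (hx i trivial) _).symm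
    · obtain ⟨i, hi⟩ : ∃ i, x i ∉ s i := by simpa [Set.mem_pi] using hx
      rw [indicator_of_notMem hx,
        Finset.prod_eq_zero (Finset.mem_univ i) (indicator_of_notMem hi (f i))]
  rw [withDensity_apply _ (.univ_pi hs), ← ofReal_integral_eq_lintegral_ofReal
      (Integrable.fintype_prod_dep hf).integrableOn
      (ae_of_all _ fun x => Finset.prod_nonneg fun i _ => hf₀ i _),
    ← integral_indicator (.univ_pi hs), hindicator, integral_fintype_prod_eq_prod,
    ENNReal.ofReal_prod_of_nonneg
      fun i _ => integral_nonneg (indicator_nonneg fun x _ => hf₀ i x)]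
  refine Finset.prod_congr rfl fun i _ => ?_
  rw [integral_indicator (hs i), withDensity_apply _ (hs i),
    ofReal_integral_eq_lintegral_ofReal (hf i).integrableOn (ae_of_all _ (hf₀ i))]

section IID

variable {α : Type*} [MeasurableSpace α] {Q : Measure α} [IsProbabilityMeasure Q]

theorem infinitePi_map_fin (n : ℕ) :
    (Measure.infinitePi fun _ : ℕ => Q).map (fun ω (i : Fin n) => ω i) =
      Measure.pi fun _ => Q := by
  have hindep : iIndepFun (fun (i : Fin n) (ω : ℕ → α) => ω i) (Measure.infinitePi fun _ => Q) :=
    (iIndepFun_infinitePi (P := fun _ => Q) (X := fun _ => id)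
      fun _ => measurable_id).precomp Fin.val_injective
  refine ((iIndepFun_iff_map_fun_eq_pi_map fun i => ?_).1 hindep).trans ?_
  · exact (measurable_pi_apply (i : ℕ)).aemeasurable
  congr 1 with i : 1
  exact (measurePreserving_eval_infinitePi (fun _ : ℕ => Q) i).map_eq

variable {E : Type*} [NormedAddCommGroup E] [NormedSpace ℝ E] [CompleteSpace E]
  [MeasurableSpace E] [BorelSpace E] {f : α → E}

theorem ae_tendsto_mean_infinitePi (hfm : Measurable f) (hf : Integrable f Q) :
    ∀ᵐ ω ∂Measure.infinitePi fun _ : ℕ => Q,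
      Tendsto (fun n : ℕ => (n : ℝ)⁻¹ • ∑ i ∈ Finset.range n, f (ω i)) atTop
        (nhds (∫ x, f x ∂Q)) := by
  set M := Measure.infinitePi fun _ : ℕ => Q
  have heval (i : ℕ) : MeasurePreserving (fun ω : ℕ → α => ω i) M Q :=
    measurePreserving_eval_infinitePi (fun _ => Q) i
  have hindep : iIndepFun (fun (i : ℕ) (ω : ℕ → α) => f (ω i)) M :=
    iIndepFun_infinitePi (X := fun _ => f) fun _ => hfm
  have hident (i : ℕ) : IdentDistrib (fun ω : ℕ → α => f (ω i)) (fun ω => f (ω 0)) M M :=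
    IdentDistrib.comp (u := f) ⟨(heval i).aemeasurable, (heval 0).aemeasurable,
      (heval i).map_eq.trans (heval 0).map_eq.symm⟩ hfm
  have hmean : ∫ ω, f (ω 0) ∂M = ∫ x, f x ∂Q := by
    rw [← (heval 0).map_eq,
      integral_map (heval 0).aemeasurable ((heval 0).map_eq ▸ hf.aestronglyMeasurable)]
  have hint : Integrable (fun ω : ℕ → α => f (ω 0)) M := (heval 0).integrable_comp_of_integrable hf
  have hpairwise : Pairwise fun i j =>
      IndepFun (fun ω : ℕ → α => f (ω i)) (fun ω => f (ω j)) M := fun i j hij =>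
    hindep.indepFun hij
  rw [← hmean]
  exact strong_law_ae (fun (i : ℕ) (ω : ℕ → α) => f (ω i)) hint hpairwise hident

theorem tendsto_pi_mean_mem_of_isOpen [SecondCountableTopology E] (hfm : Measurable f)
    (hf : Integrable f Q) {U : Set E} (hU : IsOpen U) (hmem : ∫ x, f x ∂Q ∈ U) :
    Tendsto (fun n : ℕ => (Measure.pi fun _ : Fin n => Q).real
      {x | (n : ℝ)⁻¹ • ∑ i, f (x i) ∈ U}) atTop (nhds 1) := by
  set M := Measure.infinitePi fun _ : ℕ => Q
  have hset (n : ℕ) : MeasurableSet {x : Fin n → α | (n : ℝ)⁻¹ • ∑ i, f (x i) ∈ U} :=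
    (by fun_prop : Measurable fun x : Fin n → α => (n : ℝ)⁻¹ • ∑ i, f (x i)) hU.measurableSet
  have hpi (n : ℕ) : (Measure.pi fun _ : Fin n => Q).real {x | (n : ℝ)⁻¹ • ∑ i, f (x i) ∈ U} =
      M.real {ω | (n : ℝ)⁻¹ • ∑ i ∈ Finset.range n, f (ω i) ∈ U} := by
    rw [← infinitePi_map_fin, map_measureReal_apply (by fun_prop) (hset n)]
    simp only [preimage_ofPred_eq, Finset.sum_range, M]
  simp only [hpi]
  rw [← probReal_univ (μ := M)]
  refine (ENNReal.tendsto_toReal (measure_ne_top M univ)).comp ?_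
  refine tendsto_measure_of_ae_tendsto_indicator_of_isFiniteMeasure atTop .univ (fun n =>
    (by fun_prop : Measurable fun ω : ℕ → α => (n : ℝ)⁻¹ • ∑ i ∈ Finset.range n, f (ω i))
      hU.measurableSet) ?_
  filter_upwards [ae_tendsto_mean_infinitePi hfm hf] with ω hω
  filter_upwards [hω (hU.mem_nhds hmem)] with n hn
  exact iff_of_true hn trivial

end IID

section Tilting

variable {α : Type*} [MeasurableSpace α] {Q : Measure α} {ℓ : α → ℝ}

theorem pi_withDensity_exp {ι : Type*} [Fintype ι] [SigmaFinite Q]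
    (hexp : Integrable (fun x => Real.exp (ℓ x)) Q) :
    Measure.pi (fun _ : ι => Q.withDensity fun x => ENNReal.ofReal (Real.exp (ℓ x))) =
      (Measure.pi fun _ => Q).withDensity
        fun x => ENNReal.ofReal (Real.exp (∑ i, ℓ (x i))) := by
  simp only [Real.exp_sum]
  exact pi_withDensity_ofReal (fun _ _ => (Real.exp_pos _).le) fun _ => hexp

theorem pi_withDensity_exp_real_le {ι : Type*} [Fintype ι] [IsProbabilityMeasure Q]
    (hexp : Integrable (fun x => Real.exp (ℓ x)) Q) {A : Set (ι → α)} (hA : MeasurableSet A)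
    {c : ℝ} (hc : ∀ᵐ x ∂Measure.pi fun _ : ι => Q, x ∈ A → ∑ i, ℓ (x i) ≤ c) :
    (Measure.pi fun _ : ι =>
      Q.withDensity fun x => ENNReal.ofReal (Real.exp (ℓ x))).real A ≤ Real.exp c := by
  rw [pi_withDensity_exp hexp, measureReal_def, withDensity_apply _ hA]
  refine ENNReal.toReal_le_of_le_ofReal (Real.exp_pos c).le ?_
  calc ∫⁻ x in A, ENNReal.ofReal (Real.exp (∑ i, ℓ (x i))) ∂Measure.pi (fun _ : ι => Q)
      ≤ ∫⁻ _ in A, ENNReal.ofReal (Real.exp c) ∂Measure.pi (fun _ : ι => Q) := by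
        refine setLIntegral_mono_ae' hA (hc.mono fun x hx hxA => ?_)
        gcongr
        exact hx hxA
    _ ≤ ENNReal.ofReal (Real.exp c) := by
        rw [setLIntegral_const]
        exact mul_le_of_le_one_right zero_le prob_le_one

theorem exp_mul_real_le_pi_withDensity_exp_real {ι : Type*} [Fintype ι] [SigmaFinite Q]
    (hexp : Integrable (fun x => Real.exp (ℓ x)) Q) {A : Set (ι → α)} (hA : MeasurableSet A)
    {c : ℝ} (hc : ∀ x ∈ A, c ≤ ∑ i, ℓ (x i)) :
    Real.exp c * (Measure.pi fun _ : ι => Q).real A ≤ (Measure.pi fun _ : ι =>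
      Q.withDensity fun x => ENNReal.ofReal (Real.exp (ℓ x))).real A := by
  have : IsFiniteMeasure (Q.withDensity fun x => ENNReal.ofReal (Real.exp (ℓ x))) :=
    isFiniteMeasure_withDensity_ofReal hexp.hasFiniteIntegral
  rw [← ENNReal.toReal_ofReal (Real.exp_pos c).le, measureReal_def, ← ENNReal.toReal_mul]
  refine ENNReal.toReal_mono (measure_ne_top _ A) ?_
  rw [pi_withDensity_exp hexp, withDensity_apply _ hA, ← setLIntegral_const]
  refine setLIntegral_mono' hA fun x hx => ?_
  gcongr
  exact hc x hx

theorem eventually_exp_le_pi_withDensity_exp_real [IsProbabilityMeasure Q] (hℓm : Measurable ℓ)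
    (hℓ : Integrable ℓ Q) (hexp : Integrable (fun x => Real.exp (ℓ x)) Q)
    {A : ∀ n : ℕ, Set (Fin n → α)} (hA : ∀ n, MeasurableSet (A n))
    (hQA : Tendsto (fun n => (Measure.pi fun _ : Fin n => Q).real (A n)) atTop (nhds 1)) {r : ℝ}
    (hr : r < ∫ x, ℓ x ∂Q) :
    ∀ᶠ n : ℕ in atTop, 2⁻¹ * Real.exp (n * r) ≤ (Measure.pi fun _ : Fin n =>
      Q.withDensity fun x => ENNReal.ofReal (Real.exp (ℓ x))).real (A n) := by
  have : IsFiniteMeasure (Q.withDensity fun x => ENNReal.ofReal (Real.exp (ℓ x))) :=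
    isFiniteMeasure_withDensity_ofReal hexp.hasFiniteIntegral
  have hQmean := tendsto_pi_mean_mem_of_isOpen hℓm hℓ isOpen_Ioi (mem_Ioi.2 hr)
  filter_upwards [hQA.eventually (lt_mem_nhds (by norm_num : (3 / 4 : ℝ) < 1)),
    hQmean.eventually (lt_mem_nhds (by norm_num : (3 / 4 : ℝ) < 1)),
    eventually_gt_atTop 0] with n hn hn_mean hn0
  set C : Set (Fin n → α) := {x | (n : ℝ)⁻¹ • ∑ i, ℓ (x i) ∈ Ioi r}
  have hC : MeasurableSet C :=
    (by fun_prop : Measurable fun x : Fin n → α => (n : ℝ)⁻¹ • ∑ i, ℓ (x i)) measurableSet_Ioi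
  have hinter : 2⁻¹ ≤ (Measure.pi fun _ : Fin n => Q).real (A n ∩ C) := by
    have hunion := measureReal_union_add_inter (μ := Measure.pi fun _ : Fin n => Q) (s := A n) hC
    have := measureReal_le_one (μ := Measure.pi fun _ : Fin n => Q) (s := A n ∪ C)
    linarith
  have hbound (x : Fin n → α) (hx : x ∈ A n ∩ C) : n * r ≤ ∑ i, ℓ (x i) :=
    ((lt_inv_mul_iff₀ (by positivity)).1 hx.2).le
  calc 2⁻¹ * Real.exp (n * r)
      ≤ Real.exp (n * r) * (Measure.pi fun _ : Fin n => Q).real (A n ∩ C) := by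
        rw [mul_comm]
        gcongr
    _ ≤ _ := exp_mul_real_le_pi_withDensity_exp_real hexp ((hA n).inter hC) hbound
    _ ≤ _ := measureReal_mono inter_subset_left

end Tilting

section Digamma

variable {x y : ℝ}

theorem hasDerivAt_log_Gamma (hx : 0 < x) :
    HasDerivAt (fun y => Real.log (Real.Gamma y)) (digammaFn x) x :=
  (Real.differentiableAt_Gamma fun m =>
    ne_of_gt (by linarith [m.cast_nonneg (α := ℝ)])).hasDerivAt.log (Real.Gamma_pos_of_pos hx).ne'

theorem log_Gamma_add_one (hx : 0 < x) :
    Real.log (Real.Gamma (x + 1)) = Real.log (Real.Gamma x) + Real.log x := by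
  rw [Real.Gamma_add_one hx.ne', Real.log_mul hx.ne' (Real.Gamma_pos_of_pos hx).ne', add_comm]

theorem digammaFn_add_one (hx : 0 < x) : digammaFn (x + 1) = digammaFn x + 1 / x := by
  have hleft : HasDerivAt (fun y => Real.log (Real.Gamma (y + 1))) (digammaFn (x + 1)) x :=
    (hasDerivAt_log_Gamma (by linarith : 0 < x + 1)).comp_add_const x 1
  have hright : HasDerivAt (fun y => Real.log (Real.Gamma y) + Real.log y)
      (digammaFn x + 1 / x) x := by
    simpa only [one_div] using! (hasDerivAt_log_Gamma hx).add (Real.hasDerivAt_log hx.ne')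
  refine hleft.unique (hright.congr_of_eventuallyEq ?_)
  filter_upwards [lt_mem_nhds hx] with y hy using log_Gamma_add_one hy

theorem digammaFn_le_log (hx : 0 < x) : digammaFn x ≤ Real.log x := by
  have hslope := Real.convexOn_log_Gamma.le_slope_of_hasDerivAt (x := x) (y := x + 1) hx
    (by simpa using hx.trans (lt_add_one x)) (lt_add_one x) (hasDerivAt_log_Gamma hx)
  rw [slope_def_field] at hslope
  simpa [log_Gamma_add_one hx] using hslope

theorem log_le_digammaFn_add_one (hx : 0 < x) : Real.log x ≤ digammaFn (x + 1) := by
  have hslope := Real.convexOn_log_Gamma.slope_le_of_hasDerivAt (x := x) (y := x + 1) hx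
    (by simpa using hx.trans (lt_add_one x)) (lt_add_one x) (hasDerivAt_log_Gamma (by linarith))
  rw [slope_def_field] at hslope
  simpa [log_Gamma_add_one hx] using hslope

theorem Hfun_nonpos (hx : 0 < x) : Hfun x ≤ 0 :=
  sub_nonpos.2 (digammaFn_le_log hx)

theorem neg_one_div_le_Hfun (hx : 0 < x) : -(1 / x) ≤ Hfun x := by
  have := log_le_digammaFn_add_one hx
  rw [digammaFn_add_one hx] at this
  rw [Hfun]
  linarith

theorem tendsto_Hfun_atTop : Tendsto Hfun atTop (nhds 0) := by
  have hlower : Tendsto (fun x : ℝ => -(1 / x)) atTop (nhds 0) := by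
    simpa using tendsto_inv_atTop_zero.neg (G := ℝ)
  refine tendsto_of_tendsto_of_tendsto_of_le_of_le' hlower tendsto_const_nhds ?_ ?_
  · filter_upwards [eventually_gt_atTop 0] with x hx using neg_one_div_le_Hfun hx
  · filter_upwards [eventually_gt_atTop 0] with x hx using Hfun_nonpos hx

/-- The increment `H(x + 1) - H(x)`, in closed form. -/
def HfunStep (x : ℝ) : ℝ := 1 / x - Real.log (1 + 1 / x)

theorem Hfun_add_one (hx : 0 < x) : Hfun (x + 1) = Hfun x + HfunStep x := by
  have h : 1 + 1 / x = (x + 1) / x := by field_simp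
  rw [Hfun, Hfun, HfunStep, digammaFn_add_one hx, h, Real.log_div (by linarith) hx.ne']
  ring

theorem Hfun_add_natCast (hx : 0 < x) (N : ℕ) :
    Hfun (x + N) = Hfun x + ∑ k ∈ Finset.range N, HfunStep (x + k) := by
  induction N with
  | zero => simp
  | succ N ih =>
    rw [Finset.sum_range_succ, ← add_assoc, ← ih, ← Hfun_add_one (by positivity), Nat.cast_succ,
      add_assoc]

theorem HfunStep_pos (hx : 0 < x) : 0 < HfunStep x := by
  have := Real.log_lt_sub_one_of_pos (x := 1 + 1 / x) (by positivity)
    (by simp [hx.ne'])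
  rw [HfunStep]
  linarith

theorem strictAntiOn_HfunStep : StrictAntiOn HfunStep (Ioi 0) := by
  have hmono : StrictMonoOn (fun u => u - Real.log (1 + u)) (Ioi 0) := by
    intro v (hv : 0 < v) u (hu : 0 < u) hvu
    have hlog := Real.log_le_sub_one_of_pos (x := (1 + u) / (1 + v)) (by positivity)
    rw [Real.log_div (by linarith) (by linarith)] at hlog
    have : (1 + u) / (1 + v) - 1 < u - v := by
      rw [div_sub_one (by linarith), div_lt_iff₀ (by linarith)]
      nlinarith
    change v - Real.log (1 + v) < u - Real.log (1 + u)
    linarith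
  intro x hx y hy hxy
  exact hmono (mem_Ioi.2 (one_div_pos.2 hy)) (mem_Ioi.2 (one_div_pos.2 hx))
    (one_div_lt_one_div_of_lt hx hxy)

theorem hasSum_HfunStep (hx : 0 < x) : HasSum (fun k : ℕ => HfunStep (x + k)) (-Hfun x) := by
  have hnonneg (k : ℕ) : 0 ≤ HfunStep (x + k) := (HfunStep_pos (by positivity)).le
  rw [hasSum_iff_tendsto_nat_of_nonneg hnonneg]
  have hlim : Tendsto (fun N : ℕ => Hfun (x + N) - Hfun x) atTop (nhds (0 - Hfun x)) :=
    (tendsto_Hfun_atTop.comp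
      (tendsto_atTop_add_const_left _ x tendsto_natCast_atTop_atTop)).sub_const _
  simpa [Hfun_add_natCast hx] using hlim

theorem Hfun_neg (hx : 0 < x) : Hfun x < 0 := by
  have hstep := HfunStep_pos hx
  have hnonpos := Hfun_nonpos (x := x + 1) (by positivity)
  rw [Hfun_add_one hx] at hnonpos
  linarith

theorem strictMonoOn_Hfun : StrictMonoOn Hfun (Ioi 0) := by
  intro x (hx : 0 < x) y (hy : 0 < y) hxy
  have hstep (k : ℕ) : HfunStep (y + k) < HfunStep (x + k) :=
    strictAntiOn_HfunStep (add_pos_of_pos_of_nonneg hx k.cast_nonneg)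
      (add_pos_of_pos_of_nonneg hy k.cast_nonneg) (by linarith)
  exact neg_lt_neg_iff.1
    (hasSum_lt (fun k => (hstep k).le) (hstep 0) (hasSum_HfunStep hy) (hasSum_HfunStep hx))

theorem Hfun_le_log_two_sub (hx : 0 < x) : Hfun x ≤ Real.log 2 - x⁻¹ / 2 := by
  have hnonpos := Hfun_nonpos (x := x + 1) (by positivity)
  rw [Hfun_add_one hx, HfunStep] at hnonpos
  have hlog := Real.log_le_sub_one_of_pos (x := (1 + 1 / x) / 2) (by positivity)
  rw [Real.log_div (by positivity) two_ne_zero] at hlog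
  rw [one_div] at hnonpos hlog
  linarith

theorem tendsto_Hfun_nhdsGT_zero : Tendsto Hfun (nhdsWithin 0 (Ioi 0)) atBot := by
  have hbound : Tendsto (fun x : ℝ => Real.log 2 - x⁻¹ / 2) (nhdsWithin 0 (Ioi 0)) atBot := by
    simpa only [sub_eq_add_neg, Function.comp_apply] using!
      tendsto_atBot_add_const_left _ (Real.log 2)
        (tendsto_neg_atTop_atBot.comp (tendsto_inv_nhdsGT_zero.atTop_div_const two_pos))
  refine tendsto_atBot_mono' _ ?_ hbound
  filter_upwards [self_mem_nhdsWithin] with x hx using Hfun_le_log_two_sub hx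

/-- A primitive of `H`: the log-partition function of the Gamma laws of equal shape and rate `x`,
whose densities are proportional to `exp (x * (log u - u + 1)) / u`. -/
def gammaPotential (x : ℝ) : ℝ := Real.log (Real.Gamma x) - x * Real.log x + x

theorem hasDerivAt_gammaPotential (hx : 0 < x) : HasDerivAt gammaPotential (Hfun x) x := by
  have h := ((hasDerivAt_log_Gamma hx).sub
    ((hasDerivAt_id x).mul (Real.hasDerivAt_log hx.ne'))).add (hasDerivAt_id x)
  refine h.congr_deriv ?_
  simp only [Hfun, id_eq]
  field_simp
  ring

theorem surjOn_Hfun : SurjOn Hfun (Ioi 0) (Iio 0) := by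
  intro y (hy : y < 0)
  obtain ⟨a, ha_lt, ha⟩ := ((tendsto_Hfun_nhdsGT_zero.eventually_lt_atBot y).and
    self_mem_nhdsWithin).exists
  obtain ⟨b, hb_lt, hb⟩ := ((tendsto_Hfun_atTop.eventually (lt_mem_nhds hy)).and
    (eventually_gt_atTop 0)).exists
  -- Darboux: `Hfun` is a derivative, so its image of an interval is an interval.
  have himage : OrdConnected (Hfun '' Ioi 0) := ordConnected_Ioi.image_hasDerivWithinAt
    fun _ hx => (hasDerivAt_gammaPotential hx).hasDerivWithinAt
  exact himage.out (mem_image_of_mem _ ha) (mem_image_of_mem _ hb) ⟨ha_lt.le, hb_lt.le⟩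

theorem bijOn_Hfun : BijOn Hfun (Ioi 0) (Iio 0) :=
  ⟨fun _ hx => Hfun_neg hx, strictMonoOn_Hfun.injOn, surjOn_Hfun⟩

theorem continuousOn_Hfun : ContinuousOn Hfun (Ioi 0) := fun _ hx =>
  (strictMonoOn_Hfun.continuousAt_of_image_mem_nhds (Ioi_mem_nhds hx)
    (bijOn_Hfun.image_eq ▸ Iio_mem_nhds (Hfun_neg hx))).continuousWithinAt

theorem Hinv_pos (hy : y < 0) : 0 < Hinv y :=
  bijOn_Hfun.surjOn.mapsTo_invFunOn hy

theorem Hfun_Hinv (hy : y < 0) : Hfun (Hinv y) = y :=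
  bijOn_Hfun.invOn_invFunOn.2 hy

end Digamma

/-- The relative entropy of the Gamma law of shape and rate `a` with respect to the Gamma law of
shape and rate `s`, which is the Bregman divergence of `gammaPotential` from `a` to `s`. -/
def gammaRelEntropy (s a : ℝ) : ℝ :=
  gammaPotential s - gammaPotential a - Hfun a * (s - a)

theorem continuousOn_gammaRelEntropy (s : ℝ) : ContinuousOn (gammaRelEntropy s) (Ioi 0) := by
  have hpotential : ContinuousOn gammaPotential (Ioi 0) := fun x hx =>
    (hasDerivAt_gammaPotential hx).continuousAt.continuousWithinAt
  have := continuousOn_Hfun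
  unfold gammaRelEntropy
  fun_prop

theorem Hfun_one_div {p : ℝ} (hp : p ≠ 0) : Hfun (1 / p) = p * mConst p := by
  rw [Hfun, mConst, one_div, Real.log_inv]
  field_simp
  ring

theorem ratefn_eq_gammaRelEntropy {p θ : ℝ} (hp : p ≠ 0) (hθ : p * Real.log θ < 0) :
    ratefn p θ = gammaRelEntropy (1 / p) (Gfun p θ) := by
  have hH : Hfun (Gfun p θ) = p * Real.log θ := Hfun_Hinv hθ
  rw [ratefn, gammaRelEntropy, gammaPotential, gammaPotential, hH, one_div, Real.log_inv]
  field_simp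
  ring

section GammaMeasure

variable {a b r s t : ℝ}

theorem gammaMeasure_eq_restrict_withDensity (a r : ℝ) :
    gammaMeasure a r = (volume.restrict (Ioi 0)).withDensity fun u =>
      ENNReal.ofReal (r ^ a / Real.Gamma a * (u ^ (a - 1) * Real.exp (-r * u ^ (1 : ℝ)))) := by
  rw [Measure.restrict_congr_set Ioi_ae_eq_Ici, ← withDensity_indicator measurableSet_Ici]
  refine congrArg volume.withDensity (funext fun u => ?_)
  by_cases hu : 0 ≤ u
  · simp only [gammaPDF_of_nonneg hu, indicator_of_mem (mem_Ici.2 hu), Real.rpow_one, neg_mul,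
      mul_assoc]
  · rw [gammaPDF_of_neg (not_le.1 hu), indicator_of_notMem (notMem_Ici.2 (not_le.1 hu))]

theorem ae_pos_gammaMeasure (a r : ℝ) : ∀ᵐ u ∂gammaMeasure a r, 0 < u := by
  rw [gammaMeasure_eq_restrict_withDensity]
  exact (withDensity_absolutelyContinuous _ _).ae_le (ae_restrict_mem measurableSet_Ioi)

theorem gammaMeasure_density_smul_rpow_eqOn (ha : 0 < a) (hr : 0 < r) :
    EqOn (fun u => (ENNReal.ofReal (r ^ a / Real.Gamma a *
        (u ^ (a - 1) * Real.exp (-r * u ^ (1 : ℝ))))).toReal • u ^ t)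
      (fun u => r ^ a / Real.Gamma a * (u ^ (a + t - 1) * Real.exp (-r * u ^ (1 : ℝ))))
      (Ioi 0) := by
  intro u (hu : 0 < u)
  have := Real.Gamma_pos_of_pos ha
  dsimp only
  rw [ENNReal.toReal_ofReal (by positivity), smul_eq_mul, add_sub_right_comm, Real.rpow_add hu]
  ring

theorem integrable_rpow_gammaMeasure (ha : 0 < a) (hr : 0 < r) (ht : -a < t) :
    Integrable (fun u => u ^ t) (gammaMeasure a r) := by
  rw [gammaMeasure_eq_restrict_withDensity, integrable_withDensity_iff_integrable_smul'
    (by fun_prop) (by simp)]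
  have hint := integrableOn_rpow_mul_exp_neg_mul_rpow (s := a + t - 1) (by linarith) one_pos hr
  exact IntegrableOn.congr_fun (hint.const_mul _) (gammaMeasure_density_smul_rpow_eqOn ha hr).symm
    measurableSet_Ioi

theorem integral_rpow_gammaMeasure (ha : 0 < a) (hr : 0 < r) (ht : -a < t) :
    ∫ u, u ^ t ∂gammaMeasure a r = r ^ (-t) * Real.Gamma (a + t) / Real.Gamma a := by
  rw [gammaMeasure_eq_restrict_withDensity, integral_withDensity_eq_integral_toReal_smul
    (by fun_prop) (by simp), setIntegral_congr_fun measurableSet_Ioi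
    (gammaMeasure_density_smul_rpow_eqOn ha hr), integral_const_mul,
    integral_rpow_mul_exp_neg_mul_rpow one_pos (by linarith) hr]
  rw [show -(a + t - 1 + 1) / 1 = -a + -t by ring, show (a + t - 1 + 1) / 1 = a + t by ring,
    Real.rpow_add hr, Real.rpow_neg hr.le a]
  field_simp

theorem integrable_id_gammaMeasure (ha : 0 < a) (hr : 0 < r) :
    Integrable (fun u => u) (gammaMeasure a r) := by
  simpa using integrable_rpow_gammaMeasure (t := 1) ha hr (by linarith)

theorem integral_id_gammaMeasure (ha : 0 < a) (hr : 0 < r) : ∫ u, u ∂gammaMeasure a r = a / r := by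
  have h := integral_rpow_gammaMeasure (t := 1) ha hr (by linarith)
  have := (Real.Gamma_pos_of_pos ha).ne'
  simp only [Real.rpow_one, Real.rpow_neg_one, Real.Gamma_add_one ha.ne'] at h
  rw [h]
  field_simp

theorem exp_mul_log_ae_eq_rpow_gammaMeasure (a r t : ℝ) :
    (fun u => Real.exp (t * Real.log u)) =ᵐ[gammaMeasure a r] fun u => u ^ t := by
  filter_upwards [ae_pos_gammaMeasure a r] with u hu
  rw [Real.rpow_def_of_pos hu, mul_comm]

theorem zero_mem_interior_integrableExpSet_log_gammaMeasure (ha : 0 < a) (hr : 0 < r) :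
    0 ∈ interior (integrableExpSet Real.log (gammaMeasure a r)) := by
  refine mem_interior.2 ⟨Ioi (-a), fun t ht => ?_, isOpen_Ioi, neg_lt_zero.2 ha⟩
  exact (integrable_congr (exp_mul_log_ae_eq_rpow_gammaMeasure a r t)).2
    (integrable_rpow_gammaMeasure ha hr ht)

theorem integrable_log_gammaMeasure (ha : 0 < a) (hr : 0 < r) :
    Integrable Real.log (gammaMeasure a r) :=
  integrable_of_mem_interior_integrableExpSet
    (zero_mem_interior_integrableExpSet_log_gammaMeasure ha hr)

theorem integral_log_gammaMeasure (ha : 0 < a) (hr : 0 < r) :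
    ∫ u, Real.log u ∂gammaMeasure a r = digammaFn a - Real.log r := by
  have hmgf : mgf Real.log (gammaMeasure a r) =ᶠ[nhds 0]
      fun t => r ^ (-t) * Real.Gamma (a + t) / Real.Gamma a := by
    filter_upwards [lt_mem_nhds (neg_lt_zero.2 ha)] with t ht
    rw [mgf, integral_congr_ae (exp_mul_log_ae_eq_rpow_gammaMeasure a r t),
      integral_rpow_gammaMeasure ha hr ht]
  have hGamma : HasDerivAt (fun t => Real.Gamma (a + t)) (deriv Real.Gamma a) 0 := by
    refine HasDerivAt.comp_const_add a 0 ?_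
    simpa using (Real.differentiableAt_Gamma fun m =>
      ne_of_gt (by linarith [m.cast_nonneg (α := ℝ)])).hasDerivAt
  have hderiv := (((hasDerivAt_neg (0 : ℝ)).const_rpow hr).mul hGamma).div_const (Real.Gamma a)
  rw [← deriv_mgf_zero (zero_mem_interior_integrableExpSet_log_gammaMeasure ha hr), hmgf.deriv_eq]
  refine hderiv.deriv.trans ?_
  have := (Real.Gamma_pos_of_pos ha).ne'
  simp only [neg_zero, Real.rpow_zero, add_zero, digammaFn]
  field_simp
  ring

/-- The logarithm of the density of the Gamma law of shape and rate `s` with respect to the Gamma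
law of shape and rate `a`, at the point `u`. -/
def gammaLogRatio (s a u : ℝ) : ℝ :=
  gammaPotential a - gammaPotential s + (s - a) * (Real.log u - u + 1)

theorem measurable_gammaLogRatio (s a : ℝ) : Measurable (gammaLogRatio s a) := by
  unfold gammaLogRatio
  fun_prop

theorem gammaMeasure_density_eq_exp_gammaPotential (ha : 0 < a) {u : ℝ} (hu : 0 < u) :
    a ^ a / Real.Gamma a * (u ^ (a - 1) * Real.exp (-a * u ^ (1 : ℝ))) =
      Real.exp (a * (Real.log u - u + 1) - gammaPotential a) / u := by
  have hpotential : Real.exp (-gammaPotential a) = a ^ a / Real.Gamma a * Real.exp (-a) := by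
    rw [← Real.exp_log (Real.Gamma_pos_of_pos ha), Real.rpow_def_of_pos ha, ← Real.exp_sub,
      ← Real.exp_add, gammaPotential]
    ring_nf
  have hexp : Real.exp (a * (Real.log u - u + 1)) = u ^ a * Real.exp (-a * u) * Real.exp a := by
    rw [Real.rpow_def_of_pos hu, ← Real.exp_add, ← Real.exp_add]
    ring_nf
  rw [sub_eq_add_neg _ (gammaPotential a), Real.exp_add, hpotential, hexp, Real.rpow_sub_one hu.ne',
    Real.rpow_one, Real.exp_neg a]
  field_simp

theorem gammaMeasure_self_eq_withDensity_exp (hs : 0 < s) (ha : 0 < a) :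
    gammaMeasure s s = (gammaMeasure a a).withDensity fun u =>
      ENNReal.ofReal (Real.exp (gammaLogRatio s a u)) := by
  rw [gammaMeasure_eq_restrict_withDensity a,
    ← withDensity_mul _ (by fun_prop) (measurable_gammaLogRatio s a).exp.ennreal_ofReal,
    gammaMeasure_eq_restrict_withDensity s]
  refine withDensity_congr_ae ((ae_restrict_iff' measurableSet_Ioi).2 (ae_of_all _ fun u hu => ?_))
  rw [mem_Ioi] at hu
  dsimp only
  rw [Pi.mul_apply, gammaMeasure_density_eq_exp_gammaPotential ha hu,
    gammaMeasure_density_eq_exp_gammaPotential hs hu, ← ENNReal.ofReal_mul (by positivity),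
    div_mul_eq_mul_div, ← Real.exp_add, gammaLogRatio]
  ring_nf

theorem integrable_exp_gammaLogRatio (hs : 0 < s) (ha : 0 < a) :
    Integrable (fun u => Real.exp (gammaLogRatio s a u)) (gammaMeasure a a) := by
  have := isProbabilityMeasure_gammaMeasure hs hs
  refine (lintegral_ofReal_ne_top_iff_integrable
    (measurable_gammaLogRatio s a).exp.aestronglyMeasurable
    (ae_of_all _ fun _ => (Real.exp_pos _).le)).1 ?_
  rw [← setLIntegral_univ, ← withDensity_apply _ .univ,
    ← gammaMeasure_self_eq_withDensity_exp hs ha]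
  exact measure_ne_top _ _

theorem integrable_log_sub_add_one_gammaMeasure (ha : 0 < a) (hr : 0 < r) :
    Integrable (fun u => Real.log u - u + 1) (gammaMeasure a r) := by
  have := isProbabilityMeasure_gammaMeasure ha hr
  exact ((integrable_log_gammaMeasure ha hr).sub (integrable_id_gammaMeasure ha hr)).add
    (integrable_const 1)

theorem integrable_gammaLogRatio (s : ℝ) (ha : 0 < a) :
    Integrable (gammaLogRatio s a) (gammaMeasure a a) := by
  have := isProbabilityMeasure_gammaMeasure ha ha
  exact (integrable_const _).add ((integrable_log_sub_add_one_gammaMeasure ha ha).const_mul _)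

theorem integral_gammaLogRatio (s : ℝ) (ha : 0 < a) :
    ∫ u, gammaLogRatio s a u ∂gammaMeasure a a = -gammaRelEntropy s a := by
  have := isProbabilityMeasure_gammaMeasure ha ha
  have hmean : ∫ u, (Real.log u - u + 1) ∂gammaMeasure a a = Hfun a := by
    have hlog := integrable_log_gammaMeasure ha ha
    have hid := integrable_id_gammaMeasure ha ha
    rw [integral_add (hlog.sub' hid) (integrable_const 1), integral_sub hlog hid,
      integral_log_gammaMeasure ha ha, integral_id_gammaMeasure ha ha, div_self ha.ne']
    simp [Hfun]
  simp only [gammaLogRatio]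
  rw [integral_add (integrable_const _)
      ((integrable_log_sub_add_one_gammaMeasure ha ha).const_mul _), integral_const_mul, hmean]
  simp only [integral_const, probReal_univ, one_smul, gammaRelEntropy]
  ring

end GammaMeasure

/-- The deficit in the logarithmic inequality between the geometric and the arithmetic mean. -/
def logAGM {n : ℕ} (u : Fin n → ℝ) : ℝ :=
  (n : ℝ)⁻¹ * ∑ i, Real.log (u i) - Real.log ((n : ℝ)⁻¹ * ∑ i, u i)

section GammaDeviation

variable {a b s : ℝ}

theorem measurable_logAGM (n : ℕ) : Measurable (logAGM (n := n)) := by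
  unfold logAGM
  fun_prop

theorem sum_gammaLogRatio_le (has : a ≤ s) {n : ℕ} (hn : n ≠ 0) {u : Fin n → ℝ}
    (hu : ∀ i, 0 < u i) :
    ∑ i, gammaLogRatio s a (u i) ≤
      n * (gammaPotential a - gammaPotential s + (s - a) * logAGM u) := by
  have := NeZero.mk hn
  have hsum : ∑ i, gammaLogRatio s a (u i) = n * (gammaPotential a - gammaPotential s + (s - a) *
      ((n : ℝ)⁻¹ * ∑ i, Real.log (u i) - ((n : ℝ)⁻¹ * ∑ i, u i - 1))) := by
    simp only [gammaLogRatio, Finset.sum_add_distrib, ← Finset.mul_sum, Finset.sum_sub_distrib,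
      Finset.sum_const, Finset.card_univ, Fintype.card_fin, nsmul_eq_mul]
    field_simp
    ring
  have hmean : 0 < (n : ℝ)⁻¹ * ∑ i, u i :=
    mul_pos (by positivity) (Finset.sum_pos (fun i _ => hu i) Finset.univ_nonempty)
  rw [hsum, logAGM]
  have := sub_nonneg.2 has
  gcongr
  exact Real.log_le_sub_one_of_pos hmean

theorem pi_gammaMeasure_logAGM_lt_le (ha : 0 < a) (has : a ≤ s) {n : ℕ} (hn : n ≠ 0) :
    (Measure.pi fun _ : Fin n => gammaMeasure s s).real {u | logAGM u < Hfun a} ≤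
      Real.exp (n * -gammaRelEntropy s a) := by
  have hs := ha.trans_le has
  have := isProbabilityMeasure_gammaMeasure ha ha
  rw [gammaMeasure_self_eq_withDensity_exp hs ha]
  refine pi_withDensity_exp_real_le (integrable_exp_gammaLogRatio hs ha)
    (measurable_logAGM n measurableSet_Iio) ?_
  have hpos : ∀ᵐ u ∂Measure.pi fun _ : Fin n => gammaMeasure a a, ∀ i, 0 < u i :=
    ae_all_iff.2 fun i => Measure.tendsto_eval_ae_ae.eventually (ae_pos_gammaMeasure a a)
  filter_upwards [hpos] with u hu hlt
  refine (sum_gammaLogRatio_le has hn hu).trans ?_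
  have := mul_le_mul_of_nonneg_left (le_of_lt hlt) (sub_nonneg.2 has)
  gcongr
  rw [gammaRelEntropy]
  linarith

theorem tendsto_pi_gammaMeasure_logAGM_lt (hb : 0 < b) (hba : b < a) :
    Tendsto (fun n : ℕ =>
      (Measure.pi fun _ : Fin n => gammaMeasure b b).real {u | logAGM u < Hfun a}) atTop
      (nhds 1) := by
  have := isProbabilityMeasure_gammaMeasure hb hb
  have hint : Integrable (fun u => (Real.log u, u)) (gammaMeasure b b) :=
    (integrable_log_gammaMeasure hb hb).prodMk (integrable_id_gammaMeasure hb hb)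
  have hmean : ∫ u, (Real.log u, u) ∂gammaMeasure b b = (Hfun b, 1) := by
    rw [integral_pair (integrable_log_gammaMeasure hb hb) (integrable_id_gammaMeasure hb hb),
      integral_log_gammaMeasure hb hb, integral_id_gammaMeasure hb hb, div_self hb.ne', Hfun]
  have hopen : IsOpen ({x : ℝ × ℝ | 0 < x.2} ∩ {x | x.1 - Real.log x.2 < Hfun a}) := by
    refine ContinuousOn.isOpen_inter_preimage (t := Iio (Hfun a)) ?_
      (isOpen_lt continuous_const continuous_snd) isOpen_Iio
    exact continuousOn_fst.sub (continuousOn_snd.log fun x hx => ne_of_gt hx)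
  have hmem : ∫ u, (Real.log u, u) ∂gammaMeasure b b ∈
      {x : ℝ × ℝ | 0 < x.2} ∩ {x | x.1 - Real.log x.2 < Hfun a} := by
    rw [hmean]
    exact ⟨one_pos (α := ℝ), by simpa using strictMonoOn_Hfun hb (hb.trans hba) hba⟩
  refine tendsto_of_tendsto_of_tendsto_of_le_of_le
    (tendsto_pi_mean_mem_of_isOpen (by fun_prop) hint hopen hmem) tendsto_const_nhds
    (fun n => measureReal_mono fun u hu => ?_) fun n => measureReal_le_one
  simpa [logAGM, Prod.fst_sum, Prod.snd_sum] using hu.2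

theorem eventually_exp_le_pi_gammaMeasure_logAGM_lt (hs : 0 < s) (ha : 0 < a) {r : ℝ}
    (hr : r < -gammaRelEntropy s a) :
    ∀ᶠ n : ℕ in atTop, 2⁻¹ * Real.exp (n * r) ≤
      (Measure.pi fun _ : Fin n => gammaMeasure s s).real {u | logAGM u < Hfun a} := by
  have hcont : ContinuousAt (fun b => -gammaRelEntropy s b) a :=
    ((continuousOn_gammaRelEntropy s).continuousAt (Ioi_mem_nhds ha)).neg
  obtain ⟨b, ⟨hrb, hb⟩, hba⟩ : ∃ b, (r < -gammaRelEntropy s b ∧ 0 < b) ∧ b < a :=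
    (((hcont.eventually (lt_mem_nhds hr)).and (lt_mem_nhds ha)).filter_mono
      nhdsWithin_le_nhds |>.and self_mem_nhdsWithin).exists (f := nhdsWithin a (Iio a))
  have := isProbabilityMeasure_gammaMeasure hb hb
  rw [gammaMeasure_self_eq_withDensity_exp hs hb]
  refine eventually_exp_le_pi_withDensity_exp_real (measurable_gammaLogRatio s b)
    (integrable_gammaLogRatio s hb) (integrable_exp_gammaLogRatio hs hb)
    (fun n => measurable_logAGM n measurableSet_Iio) (tendsto_pi_gammaMeasure_logAGM_lt hb hba) ?_
  rwa [integral_gammaLogRatio s hb]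

theorem tendsto_inv_mul_log_pi_gammaMeasure_logAGM_lt (ha : 0 < a) (has : a ≤ s) :
    Tendsto (fun n : ℕ => (n : ℝ)⁻¹ * Real.log
      ((Measure.pi fun _ : Fin n => gammaMeasure s s).real {u | logAGM u < Hfun a})) atTop
      (nhds (-gammaRelEntropy s a)) := by
  refine tendsto_inv_mul_log_of_exp_bounds (c := 2⁻¹) (by norm_num) ?_ fun r hr =>
    eventually_exp_le_pi_gammaMeasure_logAGM_lt (ha.trans_le has) ha hr
  filter_upwards [eventually_ne_atTop 0] with n hn using pi_gammaMeasure_logAGM_lt_le ha has hn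

end GammaDeviation

section Cone

open scoped Pointwise

/-- A set is dilation invariant if it is a cone: membership is unchanged when a point is
multiplied by a positive scalar. -/
def IsDilationInvariant {E : Type*} [SMul ℝ E] (K : Set E) : Prop :=
  ∀ ⦃c : ℝ⦄, 0 < c → ∀ x, c • x ∈ K ↔ x ∈ K

variable {E : Type*} [NormedAddCommGroup E] [NormedSpace ℝ E] [MeasurableSpace E] [BorelSpace E]
  [FiniteDimensional ℝ E] {μ : Measure E} [μ.IsAddHaarMeasure] {N : E → ℝ} {p : ℝ} {K : Set E}

theorem addHaar_inter_le_of_homogeneous (μ : Measure E) [μ.IsAddHaarMeasure] (hp : p ≠ 0)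
    (hN : ∀ c : ℝ, 0 < c → ∀ x, N (c • x) = c ^ p * N x) (hK : IsDilationInvariant K) {t : ℝ}
    (ht : 0 < t) :
    μ (K ∩ {x | N x ≤ t}) =
      ENNReal.ofReal ((t ^ (1 / p)) ^ Module.finrank ℝ E) * μ (K ∩ {x | N x ≤ 1}) := by
  set c := t ^ (1 / p) with hc
  have hc0 : 0 < c := Real.rpow_pos_of_pos ht _
  have hcp : c ^ p = t := by
    rw [hc, ← Real.rpow_mul ht.le, one_div_mul_cancel hp, Real.rpow_one]
  have hset : K ∩ {x | N x ≤ t} = c • (K ∩ {x | N x ≤ 1}) := by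
    ext x
    rw [mem_smul_set_iff_inv_smul_mem₀ hc0.ne', mem_inter_iff, mem_inter_iff,
      hK (inv_pos.2 hc0), mem_ofPred_eq, mem_ofPred_eq, hN _ (inv_pos.2 hc0),
      Real.inv_rpow hc0.le, hcp, inv_mul_le_iff₀ ht, mul_one]
  rw [hset, Measure.addHaar_smul_of_nonneg _ (by positivity)]

theorem smul_map_restrict_of_homogeneous (hp : p ≠ 0) (hNm : Measurable N)
    (hN : ∀ c : ℝ, 0 < c → ∀ x, N (c • x) = c ^ p * N x) (hN0 : ∀ᵐ x ∂μ, 0 < N x)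
    (hball : μ {x | N x ≤ 1} ≠ ⊤) (hK : IsDilationInvariant K) :
    μ {x | N x ≤ 1} • (μ.restrict K).map N = μ (K ∩ {x | N x ≤ 1}) • μ.map N := by
  have huniv : IsDilationInvariant (univ : Set E) := fun _ _ _ => Iff.rfl
  have hmap (t : ℝ) : (μ.restrict K).map N (Iic t) = μ (K ∩ {x | N x ≤ t}) := by
    rw [Measure.map_apply hNm measurableSet_Iic, Measure.restrict_apply (hNm measurableSet_Iic),
      inter_comm]
    rfl
  have hmap_univ (t : ℝ) : μ.map N (Iic t) = μ {x | N x ≤ t} :=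
    Measure.map_apply hNm measurableSet_Iic
  have hlevel {t : ℝ} (ht : 0 < t) : μ {x | N x ≤ t} =
      ENNReal.ofReal ((t ^ (1 / p)) ^ Module.finrank ℝ E) * μ {x | N x ≤ 1} := by
    simpa only [univ_inter] using addHaar_inter_le_of_homogeneous μ hp hN huniv ht
  have hnull {t : ℝ} (ht : t ≤ 0) : μ {x | N x ≤ t} = 0 := by
    refine measure_mono_null (fun x hx => ?_) (ae_iff.1 hN0)
    exact not_lt.2 (le_trans hx ht)
  refine Measure.ext_of_generateFrom_of_iUnion (range Iic) (fun k : ℕ => Iic ((k : ℝ) + 1))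
    ((BorelSpace.measurable_eq (α := ℝ)).trans (borel_eq_generateFrom_Iic ℝ)) isPiSystem_Iic
    ?_ (fun _ => mem_range_self _) (fun k => ?_) ?_
  · exact iUnion_eq_univ_iff.2 fun x => (exists_nat_ge x).imp fun k hk => hk.trans (by simp)
  · rw [Measure.smul_apply, hmap, smul_eq_mul]
    refine ENNReal.mul_ne_top hball (measure_ne_top_of_subset inter_subset_right ?_)
    rw [hlevel (by positivity)]
    exact ENNReal.mul_ne_top ENNReal.ofReal_ne_top hball
  · rintro _ ⟨t, rfl⟩
    rw [Measure.smul_apply, Measure.smul_apply, hmap, hmap_univ, smul_eq_mul, smul_eq_mul]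
    rcases le_or_gt t 0 with ht | ht
    · rw [hnull ht, measure_mono_null inter_subset_right (hnull ht), mul_zero, mul_zero]
    · rw [addHaar_inter_le_of_homogeneous μ hp hN hK ht, hlevel ht]
      ring

theorem withDensity_comp_apply_of_isDilationInvariant (hp : p ≠ 0) (hNm : Measurable N)
    (hN : ∀ c : ℝ, 0 < c → ∀ x, N (c • x) = c ^ p * N x) (hN0 : ∀ᵐ x ∂μ, 0 < N x)
    (hball0 : μ {x | N x ≤ 1} ≠ 0) (hball : μ {x | N x ≤ 1} ≠ ⊤) {φ : ℝ → ENNReal}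
    (hφ : Measurable φ) [IsProbabilityMeasure (μ.withDensity fun x => φ (N x))]
    (hKm : MeasurableSet K) (hK : IsDilationInvariant K) :
    μ.withDensity (fun x => φ (N x)) K = μ (K ∩ {x | N x ≤ 1}) / μ {x | N x ≤ 1} := by
  have hmass : ∫⁻ x, φ (N x) ∂μ = 1 := by
    rw [← setLIntegral_univ, ← withDensity_apply _ .univ, measure_univ]
  have hlintegral := congrArg (lintegral · φ)
    (smul_map_restrict_of_homogeneous hp hNm hN hN0 hball hK)
  simp only [lintegral_smul_measure, lintegral_map hφ hNm, hmass, smul_eq_mul, mul_one]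
    at hlintegral
  rw [withDensity_apply _ hKm, ENNReal.eq_div_iff hball0 hball, hlintegral]

end Cone

section PGaussian

variable {p : ℝ}

theorem measureReal_withDensity_ofReal {α : Type*} [MeasurableSpace α] {μ : Measure α} {f : α → ℝ}
    (hf0 : 0 ≤ᵐ[μ] f) (hfm : Measurable f) {A : Set α} (hA : MeasurableSet A) :
    (μ.withDensity fun x => ENNReal.ofReal (f x)).real A = ∫ x in A, f x ∂μ := by
  rw [measureReal_def, withDensity_apply _ hA, integral_eq_lintegral_of_nonneg_ae
    (ae_restrict_of_ae hf0) hfm.aestronglyMeasurable]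

theorem integral_comp_abs_rpow (hp : 0 < p) (f : ℝ → ℝ) :
    ∫ y, f (|y| ^ p) = 2 / p * ∫ u in Ioi 0, u ^ (1 / p - 1) * f u := by
  rw [integral_comp_abs (f := fun y => f (y ^ p)), ← integral_comp_rpow_Ioi_of_pos
    (g := fun y => f (y ^ p)) (one_div_pos.2 hp), ← integral_const_mul, ← integral_const_mul]
  refine setIntegral_congr_fun measurableSet_Ioi fun u (hu : 0 < u) => ?_
  rw [← Real.rpow_mul hu.le, one_div_mul_cancel hp.ne', Real.rpow_one, smul_eq_mul]
  ring

/-- The normalising constant of the density of the `p`-generalized Gaussian law. -/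
def pGaussianConst (p : ℝ) : ℝ := (2 * ((1 / p) ^ (-1 / p) * Real.Gamma (1 / p + 1)))⁻¹

/-- The `p`-generalized Gaussian law on `ℝ`, with density proportional to `exp (-|y| ^ p / p)`. -/
def pGaussian (p : ℝ) : Measure ℝ :=
  volume.withDensity fun y =>
    ENNReal.ofReal (pGaussianConst p * Real.exp (-(1 / p) * |y| ^ p))

instance (p : ℝ) : SigmaFinite (pGaussian p) :=
  SigmaFinite.withDensity_ofReal _

theorem pGaussianConst_pos (hp : 0 < p) : 0 < pGaussianConst p := by
  have := Real.Gamma_pos_of_pos (by positivity : 0 < 1 / p + 1)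
  unfold pGaussianConst
  positivity

theorem integrable_pGaussian_density (hp : 0 < p) :
    Integrable fun y : ℝ => pGaussianConst p * Real.exp (-(1 / p) * |y| ^ p) := by
  have := Real.Gamma_pos_of_pos (by positivity : 0 < 1 / p + 1)
  refine (Integrable.of_integral_ne_zero ?_).const_mul _
  rw [integral_comp_abs (f := fun y => Real.exp (-(1 / p) * y ^ p)),
    integral_exp_neg_mul_rpow hp (one_div_pos.2 hp)]
  positivity

theorem pGaussianConst_mul_eq (hp : 0 < p) :
    pGaussianConst p * (2 / p) = (1 / p) ^ (1 / p) / Real.Gamma (1 / p) := by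
  have := (Real.Gamma_pos_of_pos (one_div_pos.2 hp)).ne'
  rw [pGaussianConst, neg_div, Real.rpow_neg (by positivity),
    Real.Gamma_add_one (one_div_pos.2 hp).ne']
  field_simp

theorem pGaussian_map_abs_rpow (hp : 0 < p) :
    (pGaussian p).map (fun y => |y| ^ p) = gammaMeasure (1 / p) (1 / p) := by
  have hp' := one_div_pos.2 hp
  have := isProbabilityMeasure_gammaMeasure hp' hp'
  have hfinite : IsFiniteMeasure (pGaussian p) :=
    isFiniteMeasure_withDensity_ofReal (integrable_pGaussian_density hp).hasFiniteIntegral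
  have hc := (pGaussianConst_pos hp).le
  have := Real.Gamma_pos_of_pos hp'
  have hgamma : 0 ≤ᵐ[volume.restrict (Ioi 0)] fun u : ℝ => (1 / p) ^ (1 / p) /
      Real.Gamma (1 / p) * (u ^ (1 / p - 1) * Real.exp (-(1 / p) * u ^ (1 : ℝ))) := by
    filter_upwards [ae_restrict_mem measurableSet_Ioi] with u (hu : 0 < u)
    positivity
  refine Measure.ext fun A hA =>
    (measureReal_eq_measureReal_iff (by finiteness) (by finiteness)).1 ?_
  calc ((pGaussian p).map fun y => |y| ^ p).real A
      = ∫ y in (fun y => |y| ^ p) ⁻¹' A, pGaussianConst p * Real.exp (-(1 / p) * |y| ^ p) := by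
        rw [map_measureReal_apply (by fun_prop) hA, pGaussian, measureReal_withDensity_ofReal
          (ae_of_all _ fun y => by positivity) (by fun_prop)
          ((by fun_prop : Measurable fun y : ℝ => |y| ^ p) hA)]
    _ = ∫ y, A.indicator (fun u => pGaussianConst p * Real.exp (-(1 / p) * u)) (|y| ^ p) := by
        rw [← integral_indicator ((by fun_prop : Measurable fun y : ℝ => |y| ^ p) hA)]
        rfl
    _ = ∫ u in Ioi 0, A.indicator (fun u => (1 / p) ^ (1 / p) / Real.Gamma (1 / p) *
          (u ^ (1 / p - 1) * Real.exp (-(1 / p) * u ^ (1 : ℝ)))) u := by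
        rw [integral_comp_abs_rpow hp, ← integral_const_mul]
        congr 1 with u
        by_cases hu : u ∈ A
        · simp only [indicator_of_mem hu, ← pGaussianConst_mul_eq hp, Real.rpow_one]
          ring
        · simp only [indicator_of_notMem hu, mul_zero]
    _ = (gammaMeasure (1 / p) (1 / p)).real A := by
        rw [integral_indicator hA, gammaMeasure_eq_restrict_withDensity,
          measureReal_withDensity_ofReal hgamma (by fun_prop) hA]

theorem isProbabilityMeasure_pGaussian (hp : 0 < p) : IsProbabilityMeasure (pGaussian p) := by
  have := isProbabilityMeasure_gammaMeasure (one_div_pos.2 hp) (one_div_pos.2 hp)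
  rw [← pGaussian_map_abs_rpow hp] at this
  exact Measure.isProbabilityMeasure_of_map fun y => |y| ^ p

theorem pi_pGaussian_map_abs_rpow (hp : 0 < p) (n : ℕ) :
    (Measure.pi fun _ : Fin n => pGaussian p).map (fun x i => |x i| ^ p) =
      Measure.pi fun _ => gammaMeasure (1 / p) (1 / p) := by
  have := isProbabilityMeasure_gammaMeasure (one_div_pos.2 hp) (one_div_pos.2 hp)
  have hsigma : SigmaFinite ((pGaussian p).map fun y => |y| ^ p) := by
    rw [pGaussian_map_abs_rpow hp]
    infer_instance
  rw [← pGaussian_map_abs_rpow hp]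
  exact Measure.pi_map_pi (f := fun _ y => |y| ^ p) fun _ => by fun_prop

theorem ae_forall_ne_zero_pi_pGaussian (p : ℝ) (n : ℕ) :
    ∀ᵐ x ∂Measure.pi (fun _ : Fin n => pGaussian p), ∀ i, x i ≠ 0 := by
  have hne : ∀ᵐ y ∂pGaussian p, y ≠ 0 :=
    (withDensity_absolutelyContinuous _ _).ae_le (Measure.ae_ne volume 0)
  exact ae_all_iff.2 fun i =>
    (Measure.tendsto_eval_ae_ae (μ := fun _ : Fin n => pGaussian p) (i := i)).eventually hne

end PGaussian

/-- The sum of the `p`-th powers of the absolute values of the coordinates. -/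
def powSum (p : ℝ) {n : ℕ} (x : Fin n → ℝ) : ℝ := ∑ i, |x i| ^ p

section ConeMeasure

variable {p : ℝ} {n : ℕ} {C : Measure (Fin n → ℝ)} {K : Set (Fin n → ℝ)}

theorem powSum_nonneg (p : ℝ) (x : Fin n → ℝ) : 0 ≤ powSum p x :=
  Finset.sum_nonneg fun _ _ => by positivity

theorem powSum_pos (p : ℝ) {x : Fin n → ℝ} (hx : x ≠ 0) : 0 < powSum p x := by
  obtain ⟨i, hi⟩ := Function.ne_iff.1 hx
  exact Finset.sum_pos' (fun _ _ => by positivity)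
    ⟨i, Finset.mem_univ i, Real.rpow_pos_of_pos (abs_pos.2 hi) p⟩

theorem measurable_powSum (p : ℝ) (n : ℕ) : Measurable (powSum p (n := n)) := by
  unfold powSum
  fun_prop

theorem powSum_smul {c : ℝ} (hc : 0 ≤ c) (x : Fin n → ℝ) :
    powSum p (c • x) = c ^ p * powSum p x := by
  simp only [powSum, Pi.smul_apply, smul_eq_mul, abs_mul, abs_of_nonneg hc, Finset.mul_sum]
  exact Finset.sum_congr rfl fun i _ => Real.mul_rpow hc (abs_nonneg _)

theorem unitBallp_eq_powSum_le (hp : 0 < p) (n : ℕ) : unitBallp n p = {x | powSum p x ≤ 1} := by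
  ext x
  change (powSum p x) ^ (1 / p) ≤ 1 ↔ powSum p x ≤ 1
  rw [one_div, Real.rpow_inv_le_iff_of_pos (powSum_nonneg p x) zero_le_one hp, Real.one_rpow]

theorem unitSpherep_eq_powSum_eq (hp : p ≠ 0) (n : ℕ) :
    unitSpherep n p = {x | powSum p x = 1} := by
  ext x
  change (powSum p x) ^ (1 / p) = 1 ↔ powSum p x = 1
  rw [one_div, Real.rpow_inv_eq (powSum_nonneg p x) zero_le_one hp, Real.one_rpow]

theorem mem_coneOf_inter_unitSpherep (hp : 0 < p) (hK : IsDilationInvariant K) {x : Fin n → ℝ}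
    (hx : x ≠ 0) : x ∈ coneOf (K ∩ unitSpherep n p) ↔ x ∈ K ∩ unitBallp n p := by
  rw [unitSpherep_eq_powSum_eq hp.ne', unitBallp_eq_powSum_le hp]
  constructor
  · rintro ⟨r, ⟨hr0, hr1⟩, z, ⟨hzK, hz⟩, rfl⟩
    have hr : 0 < r := hr0.lt_of_ne' (left_ne_zero_of_smul hx)
    refine ⟨(hK hr z).2 hzK, ?_⟩
    rw [mem_ofPred_eq] at hz ⊢
    rw [powSum_smul hr0, hz, mul_one]
    exact Real.rpow_le_one hr0 hr1 hp.le
  · rintro ⟨hxK, hx1⟩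
    have hpos := powSum_pos p hx
    set r := powSum p x ^ (1 / p) with hr
    have hr0 : 0 < r := Real.rpow_pos_of_pos hpos _
    refine ⟨r, ⟨hr0.le, Real.rpow_le_one hpos.le hx1 (by positivity)⟩, r⁻¹ • x,
      ⟨(hK (inv_pos.2 hr0) x).2 hxK, ?_⟩, (smul_inv_smul₀ hr0.ne' x).symm⟩
    rw [mem_ofPred_eq, powSum_smul (inv_pos.2 hr0).le, Real.inv_rpow hr0.le, hr,
      ← Real.rpow_mul hpos.le, one_div_mul_cancel hp.ne', Real.rpow_one, inv_mul_cancel₀ hpos.ne']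

theorem IsConeMeasure.apply_of_isDilationInvariant [NeZero n] (hC : IsConeMeasure n p C)
    (hp : 0 < p) (hKm : MeasurableSet K) (hK : IsDilationInvariant K) :
    C K = volume (K ∩ unitBallp n p) / volume (unitBallp n p) := by
  obtain ⟨-, hconull, hcone⟩ := hC
  have hsphere : MeasurableSet (unitSpherep n p) := by
    rw [unitSpherep_eq_powSum_eq hp.ne']
    exact measurable_powSum p n (measurableSet_singleton 1)
  rw [← measure_inter_conull hconull, hcone _ (hKm.inter hsphere) inter_subset_right]
  congr 1
  refine measure_congr ?_
  filter_upwards [Measure.ae_ne volume (0 : Fin n → ℝ)] with x hx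
  exact propext (mem_coneOf_inter_unitSpherep hp hK hx)

theorem pi_pGaussian_eq_withDensity (hp : 0 < p) (n : ℕ) :
    Measure.pi (fun _ : Fin n => pGaussian p) = volume.withDensity fun x : Fin n → ℝ =>
      ENNReal.ofReal (pGaussianConst p ^ n * Real.exp (-(1 / p) * powSum p x)) := by
  have := (pGaussianConst_pos hp).le
  unfold pGaussian
  rw [pi_withDensity_ofReal (fun _ _ => by positivity) fun _ => integrable_pGaussian_density hp]
  simp only [Finset.prod_mul_distrib, Finset.prod_const, Finset.card_univ, Fintype.card_fin,
    ← Real.exp_sum, ← Finset.mul_sum]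
  rfl

theorem IsConeMeasure.apply_eq_pi_pGaussian [NeZero n] (hC : IsConeMeasure n p C) (hp : 0 < p)
    (hKm : MeasurableSet K) (hK : IsDilationInvariant K) :
    C K = Measure.pi (fun _ => pGaussian p) K := by
  have hball : volume (unitBallp n p) / volume (unitBallp n p) = 1 := by
    have := hC.1
    rw [← measure_univ (μ := C), hC.apply_of_isDilationInvariant hp .univ fun _ _ _ => Iff.rfl,
      univ_inter]
  have hball0 : volume (unitBallp n p) ≠ 0 := by
    rintro h
    simp [h] at hball
  have hball_top : volume (unitBallp n p) ≠ ⊤ := by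
    rintro h
    simp [h] at hball
  have hprob : IsProbabilityMeasure (Measure.pi fun _ : Fin n => pGaussian p) := by
    have := isProbabilityMeasure_pGaussian hp
    infer_instance
  have hpos : ∀ᵐ x : Fin n → ℝ, 0 < powSum p x := by
    filter_upwards [Measure.ae_ne volume (0 : Fin n → ℝ)] with x hx using powSum_pos p hx
  rw [hC.apply_of_isDilationInvariant hp hKm hK]
  rw [unitBallp_eq_powSum_le hp] at hball0 hball_top ⊢
  rw [pi_pGaussian_eq_withDensity hp] at hprob ⊢
  exact (withDensity_comp_apply_of_isDilationInvariant
    (φ := fun t => ENNReal.ofReal (pGaussianConst p ^ n * Real.exp (-(1 / p) * t))) hp.ne'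
    (measurable_powSum p n) (fun c hc x => powSum_smul hc.le x) hpos hball0 hball_top
    (by fun_prop) hKm hK).symm

theorem HasConeDirDist.measure_preimage [NeZero n] {Ω : Type*} [MeasurableSpace Ω] {P : Measure Ω}
    {X : Ω → Fin n → ℝ} (hX : HasConeDirDist n p P X) (hp : 0 < p) (hKm : MeasurableSet K)
    (hK : IsDilationInvariant K) : P (X ⁻¹' K) = Measure.pi (fun _ => pGaussian p) K := by
  obtain ⟨μR, C, hμR, hIcc, hzero, hC, hmap⟩ := hX
  have := hC.1
  have hsmul : Measurable fun rz : ℝ × (Fin n → ℝ) => rz.1 • rz.2 := by fun_prop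
  have hXm : AEMeasurable X P := by
    refine AEMeasurable.of_map_ne_zero ?_
    rw [hmap]
    have := Measure.isProbabilityMeasure_map (μ := μR.prod C) hsmul.aemeasurable
    exact IsProbabilityMeasure.ne_zero _
  have hpos : ∀ᵐ r ∂μR, 0 < r := by
    filter_upwards [mem_ae_iff.2 hIcc, measure_eq_zero_iff_ae_notMem.1 hzero] with r hr hr0
    exact hr.1.lt_of_ne (Ne.symm hr0)
  calc P (X ⁻¹' K)
      = μR.prod C ((fun rz => rz.1 • rz.2) ⁻¹' K) := by
        rw [← Measure.map_apply_of_aemeasurable hXm hKm, hmap, Measure.map_apply hsmul hKm]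
    _ = μR.prod C (univ ×ˢ K) := by
        refine measure_congr ?_
        filter_upwards [Measure.quasiMeasurePreserving_fst.ae hpos] with rz hrz
        exact propext ((hK hrz rz.2).trans (and_iff_right (mem_univ rz.1)).symm)
    _ = Measure.pi (fun _ => pGaussian p) K := by
        rw [Measure.prod_prod, measure_univ, one_mul, hC.apply_eq_pi_pGaussian hp hKm hK]

end ConeMeasure

section RatioAGM

variable {p θ : ℝ} {n : ℕ}

theorem measurable_ratioAGM (p : ℝ) (n : ℕ) : Measurable (ratioAGM p (n := n)) := by
  unfold ratioAGM
  fun_prop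

theorem ratioAGM_smul [NeZero n] (hp : p ≠ 0) {c : ℝ} (hc : 0 < c) (x : Fin n → ℝ) :
    ratioAGM p (c • x) = ratioAGM p x := by
  have hn : (n : ℝ) ≠ 0 := NeZero.ne _
  have hprod : ∏ i, |(c • x) i| = c ^ (n : ℝ) * ∏ i, |x i| := by
    simp [abs_mul, Finset.prod_mul_distrib, abs_of_pos hc]
  have hsum : 1 / (n : ℝ) * ∑ i, |(c • x) i| ^ p = c ^ p * (1 / (n : ℝ) * ∑ i, |x i| ^ p) :=
    (congrArg (1 / (n : ℝ) * ·) (powSum_smul hc.le x)).trans (mul_left_comm _ _ _)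
  rw [ratioAGM, ratioAGM, hprod, hsum, Real.mul_rpow (by positivity) (by positivity),
    Real.mul_rpow (by positivity) (by positivity), ← Real.rpow_mul hc.le, ← Real.rpow_mul hc.le,
    mul_one_div_cancel hn, mul_one_div_cancel hp, Real.rpow_one, mul_div_mul_left _ _ hc.ne']

theorem isDilationInvariant_ratioAGM_lt [NeZero n] (hp : p ≠ 0) (θ : ℝ) :
    IsDilationInvariant {x : Fin n → ℝ | ratioAGM p x < θ} := fun c hc x => by
  rw [mem_ofPred_eq, mem_ofPred_eq, ratioAGM_smul hp hc]

theorem ratioAGM_pos [NeZero n] (p : ℝ) {x : Fin n → ℝ} (hx : ∀ i, x i ≠ 0) :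
    0 < ratioAGM p x := by
  have hn : (0 : ℝ) < n := Nat.cast_pos.2 (NeZero.pos n)
  have hsum : 0 < ∑ i, |x i| ^ p := powSum_pos p fun h => hx 0 (congrFun h 0)
  have hprod : 0 < ∏ i, |x i| := Finset.prod_pos fun i _ => abs_pos.2 (hx i)
  unfold ratioAGM
  positivity

theorem logAGM_abs_rpow [NeZero n] (hp : p ≠ 0) {x : Fin n → ℝ} (hx : ∀ i, x i ≠ 0) :
    logAGM (fun i => |x i| ^ p) = p * Real.log (ratioAGM p x) := by
  have hn : (0 : ℝ) < n := Nat.cast_pos.2 (NeZero.pos n)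
  have hsum : 0 < ∑ i, |x i| ^ p := powSum_pos p fun h => hx 0 (congrFun h 0)
  have hprod : 0 < ∏ i, |x i| := Finset.prod_pos fun i _ => abs_pos.2 (hx i)
  rw [ratioAGM, Real.log_div (by positivity) (by positivity), Real.log_rpow hprod,
    Real.log_rpow (by positivity), Real.log_prod fun i _ => (abs_pos.2 (hx i)).ne', logAGM]
  simp only [Real.log_rpow (abs_pos.2 (hx _)), ← Finset.mul_sum, one_div]
  field_simp

theorem ratioAGM_lt_iff_logAGM_lt [NeZero n] (hp : 0 < p) (hθ : 0 < θ) {x : Fin n → ℝ}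
    (hx : ∀ i, x i ≠ 0) :
    ratioAGM p x < θ ↔ logAGM (fun i => |x i| ^ p) < p * Real.log θ := by
  rw [logAGM_abs_rpow hp.ne' hx, mul_lt_mul_iff_right₀ hp,
    Real.log_lt_log_iff (ratioAGM_pos p hx) hθ]

theorem HasConeDirDist.measure_ratioAGM_lt [NeZero n] {Ω : Type*} [MeasurableSpace Ω]
    {P : Measure Ω} {X : Ω → Fin n → ℝ} (hX : HasConeDirDist n p P X) (hp : 0 < p) (hθ : 0 < θ) :
    P {ω | ratioAGM p (X ω) < θ} =
      Measure.pi (fun _ : Fin n => gammaMeasure (1 / p) (1 / p)) {u | logAGM u < p * Real.log θ} :=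
  calc P {ω | ratioAGM p (X ω) < θ}
      = Measure.pi (fun _ : Fin n => pGaussian p) {x | ratioAGM p x < θ} :=
        hX.measure_preimage hp (measurableSet_lt (measurable_ratioAGM p n) measurable_const)
          (isDilationInvariant_ratioAGM_lt hp.ne' θ)
    _ = Measure.pi (fun _ : Fin n => pGaussian p)
          ((fun x i => |x i| ^ p) ⁻¹' {u | logAGM u < p * Real.log θ}) := by
        refine measure_congr ?_
        filter_upwards [ae_forall_ne_zero_pi_pGaussian p n] with x hx
        exact propext (ratioAGM_lt_iff_logAGM_lt hp hθ hx)
    _ = Measure.pi (fun _ : Fin n => gammaMeasure (1 / p) (1 / p))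
          {u | logAGM u < p * Real.log θ} := by
        rw [← Measure.map_apply (by fun_prop)
          (measurableSet_lt (measurable_logAGM n) measurable_const), pi_pGaussian_map_abs_rpow hp]

end RatioAGM

theorem statement6_general {p : ℝ} (hp : 0 < p) {Ω : ℕ → Type*} [∀ n, MeasurableSpace (Ω n)]
    {P : ∀ n, Measure (Ω n)} {X : ∀ n, Ω n → Fin n → ℝ}
    (hX : ∀ n, 1 ≤ n → HasConeDirDist n p (P n) (X n))
    {θ : ℝ} (hθ : θ ∈ Ioo 0 (Real.exp (mConst p))) :
    Tendsto (fun n : ℕ => (n : ℝ)⁻¹ * Real.log (((P n) {ω | ratioAGM p (X n ω) < θ}).toReal))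
      atTop (nhds (-(ratefn p θ))) := by
  obtain ⟨hθ_pos, hθ_lt⟩ := hθ
  have hs : 0 < 1 / p := one_div_pos.2 hp
  have hlt : p * Real.log θ < Hfun (1 / p) := by
    rw [Hfun_one_div hp.ne']
    gcongr
    exact (Real.log_lt_iff_lt_exp hθ_pos).2 hθ_lt
  have hneg : p * Real.log θ < 0 := hlt.trans (Hfun_neg hs)
  have hG_pos : 0 < Gfun p θ := Hinv_pos hneg
  have hG : Hfun (Gfun p θ) = p * Real.log θ := Hfun_Hinv hneg
  have hG_le : Gfun p θ ≤ 1 / p := ((strictMonoOn_Hfun.lt_iff_lt hG_pos hs).1 (hG ▸ hlt)).le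
  rw [ratefn_eq_gammaRelEntropy hp.ne' hneg]
  refine (tendsto_inv_mul_log_pi_gammaMeasure_logAGM_lt hG_pos hG_le).congr' ?_
  filter_upwards [eventually_ge_atTop 1] with n hn
  have : NeZero n := ⟨by lia⟩
  rw [(hX n hn).measure_ratioAGM_lt hp hθ_pos, hG, Measure.real]

/-- for `θ ∈ (0, e^{m_p})`, `lim_n (1/n) log P(R_n < θ) = -I_p(θ)`. -/
theorem statement6 (p : ℝ) (hp : 1 ≤ p)
    (Ω : ℕ → Type) [∀ n, MeasurableSpace (Ω n)]
    (P : ∀ n, Measure (Ω n)) [∀ n, IsProbabilityMeasure (P n)]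
    (X : ∀ n, Ω n → Fin n → ℝ)
    (hX : ∀ n, 1 ≤ n → HasConeDirDist n p (P n) (X n))
    (θ : ℝ) (hθ : θ ∈ Ioo 0 (Real.exp (mConst p))) :
    Tendsto
      (fun n : ℕ => (n : ℝ)⁻¹ *
        Real.log (((P n) {ω | ratioAGM p (X n ω) < θ}).toReal))
      atTop (nhds (-(ratefn p θ))) :=
  statement6_general (zero_lt_one.trans_le hp) hX hθ
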